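/- For any parameters α > 0, d > 0, β ≥ 1 and any initial data (θ₀, W₀) ∈ Ω_β, there exists a unique time-global solution (θ, W) ∈ C¹(ℝ) × C¹(ℝ) of the system dθ/dt = F₁(θ,W), dW/dt = F₂(θ,W) with θ(0) = θ₀, W(0) = W₀, and (θ(t), W(t)) ∈ Ω_β for all t ∈ ℝ. -/

import Mathlib

noncomputable section

open Real Set

/-- θ_β = arctan(1/√β). -/
def thetaB (β : ℝ) : ℝ := Real.arctan (1 / Real.sqrt β)

/-- The phase space Ω_β. -/
def OmegaB (β : ℝ) : Set (ℝ × ℝ) :=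
  {p | 0 < p.1 ∧ p.1 < Real.pi / 2 ∧ p ≠ (thetaB β, 0)}

/-- D(θ,W) = (d²/β)(√β sin θ − cos θ)² + W². -/
def Dfun (d β θ W : ℝ) : ℝ :=
  d ^ 2 / β * (Real.sqrt β * Real.sin θ - Real.cos θ) ^ 2 + W ^ 2

/-- F₁(θ,W) = α √β W / D(θ,W)^{3/2}. -/
def F1 (α d β θ W : ℝ) : ℝ :=
  α * Real.sqrt β * W / Dfun d β θ W ^ ((3 : ℝ) / 2)

/-- F₂(θ,W). -/
def F2 (α d β θ W : ℝ) : ℝ :=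
  (β ^ ((3 : ℝ) / 2) * Real.sin θ - Real.cos θ) / (d * Real.sin θ * Real.cos θ) -
    α * d ^ 2 * (Real.sin θ + Real.sqrt β * Real.cos θ) *
        (Real.sqrt β * Real.sin θ - Real.cos θ) /
      (Real.sqrt β * Dfun d β θ W ^ ((3 : ℝ) / 2))

/-- The Hamiltonian H(θ,W). -/
def Ham (α d β θ W : ℝ) : ℝ :=
  1 / (2 * d) *
      Real.log (((1 - Real.sin θ) ^ (β ^ ((3 : ℝ) / 2)) * (1 - Real.cos θ)) /
        ((1 + Real.sin θ) ^ (β ^ ((3 : ℝ) / 2)) * (1 + Real.cos θ))) -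
    α * Real.sqrt β / Dfun d β θ W ^ ((1 : ℝ) / 2)

/-!
The Hamiltonian `H` is conserved, and on `Ω_β` it is a sum of nonpositive terms which blow up at
`θ = 0`, at `θ = π / 2` and at the collision point `(θ_β, 0)` respectively. A lower bound on `H`
therefore bounds every term, so a superlevel set of `H` stays away from the boundary of `Ω_β`, and
the field `(F₁, F₂)` is bounded there although the superlevel set itself may be unbounded in `W`.
Cutting the field off by a function of `H` below the initial energy makes it a bounded `C¹` field on
the whole plane, which is complete; the cutoff factor is again conserved, so the trajectory through
the initial point never feels it. Uniqueness holds because the field is locally Lipschitz on `Ω_β`.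
-/

open Filter Topology Metric
open scoped Manifold ContDiff

section IntegralCurve

variable {E : Type*} [NormedAddCommGroup E] [NormedSpace ℝ E] {v : E → E} {f g : ℝ → E}

theorem contDiff_one_of_isIntegralCurve (hf : IsIntegralCurve f fun _ ↦ v)
    (hv : ∀ t, ContinuousAt v (f t)) : ContDiff ℝ 1 f := by
  have hderiv : deriv f = v ∘ f := funext fun t ↦ (hf t).deriv
  rw [contDiff_one_iff_deriv, hderiv]
  exact ⟨fun t ↦ (hf t).differentiableAt,
    continuous_iff_continuousAt.2 fun t ↦ (hv t).comp (hf t).continuousAt⟩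

theorem eq_of_isIntegralCurve (hf : IsIntegralCurve f fun _ ↦ v)
    (hg : IsIntegralCurve g fun _ ↦ v) (hv : ∀ t, ContDiffAt ℝ 1 v (f t)) {t₀ : ℝ}
    (h : f t₀ = g t₀) : f = g := by
  have hclosed : IsClosed {t | f t = g t} := isClosed_eq hf.continuous hg.continuous
  have hopen : IsOpen {t | f t = g t} := by
    refine isOpen_iff_mem_nhds.2 fun t (ht : f t = g t) ↦ ?_
    obtain ⟨K, s, hs, hlip⟩ := (hv t).exists_lipschitzOnWith
    have hfs : ∀ᶠ u in 𝓝 t, f u ∈ s := (hf t).continuousAt hs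
    have hgs : ∀ᶠ u in 𝓝 t, g u ∈ s := (hg t).continuousAt (ht ▸ hs)
    exact ODE_solution_unique_of_eventually (.of_forall fun _ ↦ hlip)
      (hfs.mono fun u hu ↦ ⟨hf u, hu⟩) (hgs.mono fun u hu ↦ ⟨hg u, hu⟩) ht
  exact funext <| eq_univ_iff_forall.1 <| IsClopen.eq_univ ⟨hclosed, hopen⟩ ⟨t₀, h⟩

theorem comp_eq_of_isIntegralCurve {F : Type*} [NormedAddCommGroup F] [NormedSpace ℝ F]
    {H : E → F} (hf : IsIntegralCurve f fun _ ↦ v)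
    (hH : ∀ t, DifferentiableAt ℝ H (f t)) (hHv : ∀ t, fderiv ℝ H (f t) (v (f t)) = 0)
    (t s : ℝ) : H (f t) = H (f s) := by
  have hderiv (u : ℝ) : HasDerivAt (H ∘ f) 0 u :=
    hHv u ▸ (hH u).hasFDerivAt.comp_hasDerivAt u (hf u)
  exact is_const_of_deriv_eq_zero (fun u ↦ (hderiv u).differentiableAt)
    (fun u ↦ (hderiv u).deriv) t s

theorem exists_hasDerivAt_Ioo_of_contDiff_of_bounded [ProperSpace E] (hv : ContDiff ℝ 1 v) {M : ℝ}
    (hM : ∀ x, ‖v x‖ ≤ M) (x₀ : E) {T : ℝ} (hT : 0 ≤ T) :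
    ∃ f : ℝ → E, f 0 = x₀ ∧ ∀ t ∈ Ioo (-T) T, HasDerivAt f (v (f t)) t := by
  have hM₀ : 0 ≤ M := (norm_nonneg _).trans (hM x₀)
  obtain ⟨K, hK⟩ := LocallyLipschitzOn.exists_lipschitzOnWith_of_compact
    (isCompact_closedBall x₀ (M * T)) hv.locallyLipschitz.locallyLipschitzOn
  have hpicard : IsPicardLindelof (fun _ ↦ v) (tmin := -T) (tmax := T)
      ⟨0, neg_nonpos.2 hT, hT⟩ x₀ ⟨M * T, by positivity⟩ 0 ⟨M, hM₀⟩ K :=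
    .of_time_independent (fun x _ ↦ hM x) hK <| by
      change M * max (T - 0) (0 - -T) ≤ M * T - 0
      simp
  obtain ⟨f, hf₀, hf⟩ := hpicard.exists_eq_forall_mem_Icc_hasDerivWithinAt₀
  exact ⟨f, hf₀, fun t ht ↦ (hf t (Ioo_subset_Icc_self ht)).hasDerivAt (Icc_mem_nhds ht.1 ht.2)⟩

theorem exists_isIntegralCurve_of_contDiff_of_bounded [ProperSpace E] (hv : ContDiff ℝ 1 v) {M : ℝ}
    (hM : ∀ x, ‖v x‖ ≤ M) (x₀ : E) :
    ∃ f : ℝ → E, f 0 = x₀ ∧ IsIntegralCurve f fun _ ↦ v := by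
  have hsection : CMDiff 1 (fun x ↦ (⟨x, v x⟩ : TangentBundle 𝓘(ℝ, E) E)) :=
    contMDiff_vectorSpace_iff_contDiff.2 hv
  have hlocal : ∀ T, ∃ f : ℝ → E, f 0 = x₀ ∧
      IsMIntegralCurveOn (I := 𝓘(ℝ, E)) f v (Ioo (-T) T) := by
    intro T
    obtain ⟨f, hf₀, hf⟩ :=
      exists_hasDerivAt_Ioo_of_contDiff_of_bounded hv hM x₀ (abs_nonneg T)
    refine ⟨f, hf₀, fun t ht ↦ ?_⟩
    have ht' : t ∈ Ioo (-|T|) |T| := abs_lt.1 ((abs_lt.2 ht).trans_le (le_abs_self T))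
    exact (hf t ht').hasFDerivAt.hasMFDerivAt.hasMFDerivWithinAt
  obtain ⟨f, hf₀, hf⟩ :=
    (exists_isMIntegralCurve_iff_exists_isMIntegralCurveOn_Ioo hsection x₀).2 hlocal
  exact ⟨f, hf₀, fun t ↦ hasDerivAt_iff_hasFDerivAt.2 (hasMFDerivAt_iff_hasFDerivAt.1 (hf t))⟩

end IntegralCurve

section ConservedQuantity

variable {E : Type*} {Ω K : Set E} {H : E → ℝ} {a b : ℝ} {x : E}

/-- A cutoff which depends on `x` only through `H x`: it vanishes outside `Ω` and where `H ≤ a`, and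
equals `1` on the part of `Ω` where `b ≤ H`. Multiplying a field tangent to the level sets of `H`
by it does not change the trajectories above the level `b`. -/
def superlevelCutoff (Ω : Set E) (H : E → ℝ) (a b : ℝ) : E → ℝ :=
  Ω.indicator fun x ↦ smoothTransition ((H x - a) / (b - a))

theorem superlevelCutoff_nonneg : 0 ≤ superlevelCutoff Ω H a b x :=
  indicator_apply_nonneg fun _ ↦ smoothTransition.nonneg _

theorem superlevelCutoff_le_one : superlevelCutoff Ω H a b x ≤ 1 :=
  indicator_apply_le' (fun _ ↦ smoothTransition.le_one _) fun _ ↦ zero_le_one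

theorem superlevelCutoff_eq_one (hab : a < b) (hx : x ∈ Ω) (hb : b ≤ H x) :
    superlevelCutoff Ω H a b x = 1 := by
  rw [superlevelCutoff, indicator_of_mem hx, smoothTransition.one_of_one_le]
  rw [le_div_iff₀ (sub_pos.2 hab)]
  linarith

theorem mem_of_superlevelCutoff_ne_zero (hx : superlevelCutoff Ω H a b x ≠ 0) : x ∈ Ω :=
  mem_of_indicator_ne_zero hx

theorem lt_of_superlevelCutoff_ne_zero (hab : a < b) (hx : superlevelCutoff Ω H a b x ≠ 0) :
    a < H x := by
  contrapose! hx
  have hneg : (H x - a) / (b - a) ≤ 0 :=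
    div_nonpos_of_nonpos_of_nonneg (sub_nonpos.2 hx) (sub_pos.2 hab).le
  exact indicator_apply_eq_zero.2 fun _ ↦ smoothTransition.zero_of_nonpos hneg

theorem norm_superlevelCutoff_smul_le {F : Type*} [NormedAddCommGroup F] [NormedSpace ℝ F]
    {g : E → F} {M : ℝ} (hab : a < b) (hM : 0 ≤ M) (hg : ∀ x ∈ Ω, a ≤ H x → ‖g x‖ ≤ M) (x : E) :
    ‖superlevelCutoff Ω H a b x • g x‖ ≤ M := by
  by_cases hx : superlevelCutoff Ω H a b x = 0
  · simpa [hx] using hM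
  · rw [norm_smul, norm_of_nonneg superlevelCutoff_nonneg]
    exact (mul_le_of_le_one_left (norm_nonneg _) superlevelCutoff_le_one).trans <|
      hg x (mem_of_superlevelCutoff_ne_zero hx) (lt_of_superlevelCutoff_ne_zero hab hx).le

theorem superlevelCutoff_eventuallyEq [TopologicalSpace E] (hΩ : IsOpen Ω) (hx : x ∈ Ω) :
    superlevelCutoff Ω H a b =ᶠ[𝓝 x] fun y ↦ smoothTransition ((H y - a) / (b - a)) :=
  (eqOn_indicator (s := Ω)).eventuallyEq_of_mem (hΩ.mem_nhds hx)

variable [NormedAddCommGroup E] [NormedSpace ℝ E]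

theorem contDiff_superlevelCutoff_smul {F : Type*} [NormedAddCommGroup F] [NormedSpace ℝ F]
    {n : ℕ∞} {g : E → F} (hΩ : IsOpen Ω) (hH : ContDiffOn ℝ n H Ω) (hg : ContDiffOn ℝ n g Ω)
    (hab : a < b) (hK : IsClosed K) (hKΩ : K ⊆ Ω) (hHK : ∀ x ∈ Ω, a ≤ H x → x ∈ K) :
    ContDiff ℝ n fun x ↦ superlevelCutoff Ω H a b x • g x := by
  refine contDiff_iff_contDiffAt.2 fun x ↦ ?_
  by_cases hx : x ∈ Ω
  · have harg : ContDiffAt ℝ n (fun y ↦ (H y - a) / (b - a)) x :=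
      ((hH.contDiffAt (hΩ.mem_nhds hx)).sub contDiffAt_const).div_const _
    exact ((smoothTransition.contDiffAt.comp x harg).congr_of_eventuallyEq
      (superlevelCutoff_eventuallyEq hΩ hx)).smul (hg.contDiffAt (hΩ.mem_nhds hx))
  · have hzero : (fun y ↦ superlevelCutoff Ω H a b y • g y) =ᶠ[𝓝 x] 0 := by
      filter_upwards [hK.isOpen_compl.mem_nhds fun h ↦ hx (hKΩ h)] with y hy
      by_contra hne
      have hcut : superlevelCutoff Ω H a b y ≠ 0 := left_ne_zero_of_smul hne
      exact hy (hHK y (mem_of_superlevelCutoff_ne_zero hcut)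
        (lt_of_superlevelCutoff_ne_zero hab hcut).le)
    exact contDiffAt_const.congr_of_eventuallyEq hzero

theorem fderiv_superlevelCutoff_apply_eq_zero (hΩ : IsOpen Ω) (hH : DifferentiableOn ℝ H Ω) {y : E}
    (hy : x ∈ Ω → fderiv ℝ H x y = 0) : fderiv ℝ (superlevelCutoff Ω H a b) x y = 0 := by
  by_cases hx : x ∈ Ω
  · have hHx : HasFDerivAt (fun z ↦ (b - a)⁻¹ * (H z - a)) ((b - a)⁻¹ • fderiv ℝ H x) x :=
      ((hH.differentiableAt (hΩ.mem_nhds hx)).hasFDerivAt.sub_const a).const_mul _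
    have hsmooth : DifferentiableAt ℝ smoothTransition ((b - a)⁻¹ * (H x - a)) :=
      (smoothTransition.contDiffAt (n := 1)).differentiableAt one_ne_zero
    have heq : superlevelCutoff Ω H a b =ᶠ[𝓝 x]
        smoothTransition ∘ fun z ↦ (b - a)⁻¹ * (H z - a) := by
      simpa only [Function.comp_def, div_eq_inv_mul] using
        superlevelCutoff_eventuallyEq hΩ hx
    rw [heq.fderiv_eq, (hsmooth.hasDerivAt.comp_hasFDerivAt x hHx).fderiv]
    simp [hy hx]
  · have hmin : IsLocalMin (superlevelCutoff Ω H a b) x := by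
      refine .of_forall fun z ↦ ?_
      rw [superlevelCutoff, indicator_of_notMem hx]
      exact superlevelCutoff_nonneg
    simp [hmin.fderiv_eq_zero]

theorem exists_isIntegralCurve_of_conserved [ProperSpace E] (hΩ : IsOpen Ω) {v : E → E}
    (hv : ContDiffOn ℝ 1 v Ω) (hH : ContDiffOn ℝ 1 H Ω)
    (hHv : ∀ x ∈ Ω, fderiv ℝ H x (v x) = 0) {x₀ : E} (hx₀ : x₀ ∈ Ω) (ha : a < H x₀)
    (hK : IsClosed K) (hKΩ : K ⊆ Ω) (hHK : ∀ x ∈ Ω, a ≤ H x → x ∈ K) {M : ℝ}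
    (hM : ∀ x ∈ K, ‖v x‖ ≤ M) :
    ∃ f : ℝ → E, f 0 = x₀ ∧ (∀ t, f t ∈ Ω) ∧ IsIntegralCurve f fun _ ↦ v := by
  set χ : E → ℝ := superlevelCutoff Ω H a (H x₀)
  have hχv : ContDiff ℝ 1 fun x ↦ χ x • v x :=
    contDiff_superlevelCutoff_smul (n := 1) hΩ hH hv ha hK hKΩ hHK
  have hχ : ContDiff ℝ 1 χ := by
    simpa using contDiff_superlevelCutoff_smul (n := 1) hΩ hH (contDiffOn_const (c := (1 : ℝ)))
      ha hK hKΩ hHK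
  have hM₀ : 0 ≤ M := (norm_nonneg _).trans (hM x₀ (hHK x₀ hx₀ ha.le))
  obtain ⟨f, hf₀, hf⟩ := exists_isIntegralCurve_of_contDiff_of_bounded hχv
    (norm_superlevelCutoff_smul_le ha hM₀ fun x hx hax ↦ hM x (hHK x hx hax)) x₀
  have hχf (t : ℝ) : χ (f t) = 1 := by
    rw [comp_eq_of_isIntegralCurve hf (fun t ↦ hχ.differentiable one_ne_zero _)
      (fun t ↦ fderiv_superlevelCutoff_apply_eq_zero hΩ (hH.differentiableOn one_ne_zero)
        fun ht ↦ by simp [hHv _ ht]) t 0, hf₀]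
    exact superlevelCutoff_eq_one ha hx₀ le_rfl
  refine ⟨f, hf₀, fun t ↦ ?_, fun t ↦ ?_⟩
  · exact mem_of_superlevelCutoff_ne_zero ((hχf t).trans_ne one_ne_zero)
  · simpa only [hχf t, one_smul] using hf t

end ConservedQuantity

section Artanh

variable {θ x C : ℝ}

theorem hasDerivAt_artanh (hx : x ∈ Ioo (-1) 1) : HasDerivAt artanh (1 - x ^ 2)⁻¹ x := by
  have hpos : 0 < 1 + x := by linarith [hx.1]
  have hneg : 0 < 1 - x := by linarith [hx.2]
  have heq : artanh =ᶠ[𝓝 x] fun y ↦ 1 / 2 * log ((1 + y) / (1 - y)) :=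
    eventually_of_mem (Ioo_mem_nhds hx.1 hx.2) fun y hy ↦
      artanh_eq_half_log (Ioo_subset_Icc_self hy)
  have hquot := ((hasDerivAt_id x).const_add 1).div ((hasDerivAt_id x).const_sub 1) hneg.ne'
  refine (((hquot.log (div_pos hpos hneg).ne').const_mul (1 / 2)).congr_of_eventuallyEq
    heq).congr_deriv ?_
  have : 1 - x ^ 2 ≠ 0 := by nlinarith
  simp only [id, Pi.div_apply]
  field_simp
  ring

theorem sin_mem_Ioo_of_cos_ne_zero (h : cos θ ≠ 0) : sin θ ∈ Ioo (-1) 1 :=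
  abs_lt.1 <| sq_lt_one_iff_abs_lt_one _ |>.1 <| by
    linarith [sin_sq_add_cos_sq θ, sq_pos_of_ne_zero h]

theorem cos_mem_Ioo_of_sin_ne_zero (h : sin θ ≠ 0) : cos θ ∈ Ioo (-1) 1 :=
  abs_lt.1 <| sq_lt_one_iff_abs_lt_one _ |>.1 <| by
    linarith [sin_sq_add_cos_sq θ, sq_pos_of_ne_zero h]

theorem hasDerivAt_artanh_sin (h : cos θ ≠ 0) :
    HasDerivAt (fun θ ↦ artanh (sin θ)) (1 / cos θ) θ := by
  refine ((hasDerivAt_artanh (sin_mem_Ioo_of_cos_ne_zero h)).comp θ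
    (hasDerivAt_sin θ)).congr_deriv ?_
  rw [← cos_sq']
  field_simp

theorem hasDerivAt_artanh_cos (h : sin θ ≠ 0) :
    HasDerivAt (fun θ ↦ artanh (cos θ)) (-(1 / sin θ)) θ := by
  refine ((hasDerivAt_artanh (cos_mem_Ioo_of_sin_ne_zero h)).comp θ
    (hasDerivAt_cos θ)).congr_deriv ?_
  rw [← sin_sq]
  field_simp

theorem inv_cosh_le_sqrt_one_sub_sq (h₀ : 0 ≤ x) (h₁ : x < 1) (hC : artanh x ≤ C) :
    1 / cosh C ≤ √(1 - x ^ 2) := by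
  have hcosh : cosh (artanh x) ≤ cosh C := by
    rw [cosh_le_cosh, abs_of_nonneg (artanh_nonneg h₀)]
    exact hC.trans (le_abs_self C)
  have hsqrt : 0 < √(1 - x ^ 2) := sqrt_pos.2 (by nlinarith)
  rw [cosh_artanh ⟨by linarith, h₁⟩, div_le_iff₀ hsqrt] at hcosh
  rwa [div_le_iff₀' (cosh_pos C)]

theorem inv_cosh_le_cos (hs : 0 ≤ sin θ) (hc : 0 < cos θ) (hC : artanh (sin θ) ≤ C) :
    1 / cosh C ≤ cos θ := by
  have := inv_cosh_le_sqrt_one_sub_sq hs (sin_mem_Ioo_of_cos_ne_zero hc.ne').2 hC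
  rwa [← cos_sq', sqrt_sq hc.le] at this

theorem inv_cosh_le_sin (hs : 0 < sin θ) (hc : 0 ≤ cos θ) (hC : artanh (cos θ) ≤ C) :
    1 / cosh C ≤ sin θ := by
  have := inv_cosh_le_sqrt_one_sub_sq hc (cos_mem_Ioo_of_sin_ne_zero hs.ne').2 hC
  rwa [← sin_sq, sqrt_sq hs.le] at this

end Artanh

section PhaseSpace

variable {d β θ W : ℝ} {p : ℝ × ℝ}

theorem sqrt_mul_sin_sub_cos_eq_zero_iff (hβ : 0 < β) (hθ : θ ∈ Ioo 0 (π / 2)) :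
    √β * sin θ - cos θ = 0 ↔ θ = thetaB β := by
  have hsqrt : 0 < √β := sqrt_pos.2 hβ
  have hcos : 0 < cos θ := cos_pos_of_mem_Ioo ⟨by linarith [hθ.1, pi_pos], hθ.2⟩
  have htan : √β * sin θ - cos θ = 0 ↔ tan θ = 1 / √β := by
    rw [tan_eq_sin_div_cos, div_eq_div_iff hcos.ne' hsqrt.ne', sub_eq_zero, one_mul, mul_comm]
  rw [htan, thetaB]
  constructor
  · intro h
    rw [← h, arctan_tan (by linarith [hθ.1, pi_pos]) hθ.2]
  · rintro rfl
    exact tan_arctan _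

theorem Dfun_nonneg (hβ : 0 ≤ β) : 0 ≤ Dfun d β θ W := by
  unfold Dfun
  positivity

theorem Dfun_pos_iff (hd : d ≠ 0) (hβ : 0 < β) (hθ : θ ∈ Ioo 0 (π / 2)) :
    0 < Dfun d β θ W ↔ (θ, W) ≠ (thetaB β, 0) := by
  have hcoeff : d ^ 2 / β ≠ 0 := by positivity
  rw [(Dfun_nonneg hβ.le).lt_iff_ne', Ne, not_iff_not, Dfun, Prod.mk_inj,
    ← sqrt_mul_sin_sub_cos_eq_zero_iff hβ hθ,
    add_eq_zero_iff_of_nonneg (by positivity) (by positivity)]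
  simp [hcoeff]

theorem mem_OmegaB_iff (hd : d ≠ 0) (hβ : 0 < β) :
    p ∈ OmegaB β ↔ p.1 ∈ Ioo 0 (π / 2) ∧ 0 < Dfun d β p.1 p.2 := by
  change 0 < p.1 ∧ p.1 < π / 2 ∧ p ≠ (thetaB β, 0) ↔ _
  rw [← and_assoc]
  exact and_congr_right fun hθ ↦ (Dfun_pos_iff hd hβ hθ).symm

theorem sin_pos_of_mem_OmegaB (hp : p ∈ OmegaB β) : 0 < sin p.1 :=
  sin_pos_of_pos_of_lt_pi hp.1 (by linarith [hp.2.1, pi_pos])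

theorem cos_pos_of_mem_OmegaB (hp : p ∈ OmegaB β) : 0 < cos p.1 :=
  cos_pos_of_mem_Ioo ⟨by linarith [hp.1, pi_pos], hp.2.1⟩

theorem contDiff_Dfun {n : ℕ∞} : ContDiff ℝ n fun p : ℝ × ℝ ↦ Dfun d β p.1 p.2 := by
  unfold Dfun
  fun_prop

theorem isOpen_OmegaB : IsOpen (OmegaB β) :=
  (isOpen_lt continuous_const continuous_fst).inter <|
    (isOpen_lt continuous_fst continuous_const).inter isOpen_ne

theorem hasFDerivAt_Dfun (p : ℝ × ℝ) :
    HasFDerivAt (fun q : ℝ × ℝ ↦ Dfun d β q.1 q.2)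
      ((2 * (d ^ 2 / β) * (√β * sin p.1 - cos p.1) * (sin p.1 + √β * cos p.1)) •
          ContinuousLinearMap.fst ℝ ℝ ℝ +
        (2 * p.2) • ContinuousLinearMap.snd ℝ ℝ ℝ) p := by
  have hangle : HasDerivAt (fun θ ↦ d ^ 2 / β * (√β * sin θ - cos θ) ^ 2)
      (2 * (d ^ 2 / β) * (√β * sin p.1 - cos p.1) * (sin p.1 + √β * cos p.1)) p.1 := by
    refine (((((hasDerivAt_sin p.1).const_mul (√β)).sub
      (hasDerivAt_cos p.1)).pow 2).const_mul (d ^ 2 / β)).congr_deriv ?_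
    simp only [Pi.sub_apply]
    ring
  have hsq : HasDerivAt (fun W : ℝ ↦ W ^ 2) (2 * p.2) p.2 := by
    simpa using hasDerivAt_pow 2 p.2
  exact (hangle.comp_hasFDerivAt p hasFDerivAt_fst).add (hsq.comp_hasFDerivAt p hasFDerivAt_snd)


end PhaseSpace

section Hamiltonian

variable {α d β : ℝ} {p : ℝ × ℝ}

/-- The right-hand side `(F₁, F₂)` of the system, as a vector field on the plane. -/
def vectorField (α d β : ℝ) (p : ℝ × ℝ) : ℝ × ℝ :=
  (F1 α d β p.1 p.2, F2 α d β p.1 p.2)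

theorem contDiffOn_vectorField (hd : d ≠ 0) (hβ : 0 < β) {n : ℕ∞} :
    ContDiffOn ℝ n (vectorField α d β) (OmegaB β) := by
  refine fun p hp ↦ ContDiffAt.contDiffWithinAt ?_
  have hsin := (sin_pos_of_mem_OmegaB hp).ne'
  have hcos := (cos_pos_of_mem_OmegaB hp).ne'
  have hsqrt : √β ≠ 0 := (sqrt_pos.2 hβ).ne'
  have hD : 0 < Dfun d β p.1 p.2 := ((mem_OmegaB_iff hd hβ).1 hp).2
  have hpow : ContDiffAt ℝ n (fun q : ℝ × ℝ ↦ Dfun d β q.1 q.2 ^ (3 / 2 : ℝ)) p :=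
    contDiff_Dfun.contDiffAt.rpow_const_of_ne hD.ne'
  have hpow_ne : Dfun d β p.1 p.2 ^ (3 / 2 : ℝ) ≠ 0 := (rpow_pos_of_pos hD _).ne'
  unfold vectorField F1 F2
  refine .prodMk (.div (by fun_prop) hpow hpow_ne) (.sub ?_ ?_)
  · exact .div (by fun_prop) (by fun_prop) (by positivity)
  · exact .div (by fun_prop) (contDiffAt_const.mul hpow) (mul_ne_zero hsqrt hpow_ne)

theorem Ham_eq {θ W : ℝ} (hs : sin θ ∈ Ioo (-1) 1) (hc : cos θ ∈ Ioo (-1) 1) :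
    Ham α d β θ W = -(β ^ (3 / 2 : ℝ) * artanh (sin θ) + artanh (cos θ)) / d -
      α * √β / Dfun d β θ W ^ (1 / 2 : ℝ) := by
  have hs₀ : 0 < 1 - sin θ := by linarith [hs.2]
  have hs₁ : 0 < 1 + sin θ := by linarith [hs.1]
  have hc₀ : 0 < 1 - cos θ := by linarith [hc.2]
  have hc₁ : 0 < 1 + cos θ := by linarith [hc.1]
  rw [Ham, artanh_eq_half_log (Ioo_subset_Icc_self hs), artanh_eq_half_log (Ioo_subset_Icc_self hc),
    log_div (by positivity) (by positivity), log_mul (by positivity) (by positivity),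
    log_mul (by positivity) (by positivity), log_rpow hs₀, log_rpow hs₁,
    log_div hs₁.ne' hs₀.ne', log_div hc₁.ne' hc₀.ne']
  ring

theorem Ham_eq_of_mem_OmegaB (hp : p ∈ OmegaB β) :
    Ham α d β p.1 p.2 = -(β ^ (3 / 2 : ℝ) * artanh (sin p.1) + artanh (cos p.1)) / d -
      α * √β / Dfun d β p.1 p.2 ^ (1 / 2 : ℝ) :=
  Ham_eq (sin_mem_Ioo_of_cos_ne_zero (cos_pos_of_mem_OmegaB hp).ne')
    (cos_mem_Ioo_of_sin_ne_zero (sin_pos_of_mem_OmegaB hp).ne')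

theorem hasDerivAt_rpow_neg_half {x : ℝ} (hx : 0 < x) :
    HasDerivAt (fun y : ℝ ↦ y ^ (-(1 / 2) : ℝ)) (-(1 / 2) * (x ^ (3 / 2 : ℝ))⁻¹) x := by
  refine (hasDerivAt_rpow_const (.inl hx.ne')).congr_deriv ?_
  rw [← rpow_neg hx.le]
  norm_num

theorem hasFDerivAt_Ham (hd : d ≠ 0) (hβ : 0 < β) (hp : p ∈ OmegaB β) :
    HasFDerivAt (fun q : ℝ × ℝ ↦ Ham α d β q.1 q.2)
      ((-F2 α d β p.1 p.2) • ContinuousLinearMap.fst ℝ ℝ ℝ +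
        F1 α d β p.1 p.2 • ContinuousLinearMap.snd ℝ ℝ ℝ) p := by
  have hsin := (sin_pos_of_mem_OmegaB hp).ne'
  have hcos := (cos_pos_of_mem_OmegaB hp).ne'
  have hsqrt : √β ≠ 0 := (sqrt_pos.2 hβ).ne'
  have hD : 0 < Dfun d β p.1 p.2 := ((mem_OmegaB_iff hd hβ).1 hp).2
  have heq : (fun q : ℝ × ℝ ↦ Ham α d β q.1 q.2) =ᶠ[𝓝 p] fun q ↦
      -(β ^ (3 / 2 : ℝ) * artanh (sin q.1) + artanh (cos q.1)) / d -
        α * √β * Dfun d β q.1 q.2 ^ (-(1 / 2) : ℝ) := by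
    filter_upwards [isOpen_OmegaB.mem_nhds hp] with q hq
    rw [Ham_eq_of_mem_OmegaB hq, rpow_neg (Dfun_nonneg hβ.le), div_eq_mul_inv (α * √β)]
  have hangle : HasDerivAt
      (fun θ ↦ -(β ^ (3 / 2 : ℝ) * artanh (sin θ) + artanh (cos θ)) / d)
      (-(β ^ (3 / 2 : ℝ) * (1 / cos p.1) + -(1 / sin p.1)) / d) p.1 :=
    (((hasDerivAt_artanh_sin hcos).const_mul _).add (hasDerivAt_artanh_cos hsin)).neg.div_const d
  have hpow_ne : Dfun d β p.1 p.2 ^ (3 / 2 : ℝ) ≠ 0 := (rpow_pos_of_pos hD _).ne'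
  have hβ_eq : d ^ 2 / β = d ^ 2 / √β ^ 2 := by rw [sq_sqrt hβ.le]
  have hF2 : -F2 α d β p.1 p.2 = -(β ^ (3 / 2 : ℝ) * (1 / cos p.1) + -(1 / sin p.1)) / d -
      α * √β * (-(1 / 2) * (Dfun d β p.1 p.2 ^ (3 / 2 : ℝ))⁻¹ *
        (2 * (d ^ 2 / β) * (√β * sin p.1 - cos p.1) * (sin p.1 + √β * cos p.1))) := by
    rw [hβ_eq, F2]
    field_simp
    ring
  have hF1 : F1 α d β p.1 p.2 =
      -(α * √β * (-(1 / 2) * (Dfun d β p.1 p.2 ^ (3 / 2 : ℝ))⁻¹ * (2 * p.2))) := by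
    rw [F1]
    field_simp
  rw [hF1, hF2]
  refine (((hangle.comp_hasFDerivAt p hasFDerivAt_fst).sub
    (((hasDerivAt_rpow_neg_half hD).comp_hasFDerivAt p (hasFDerivAt_Dfun p)).const_mul
      (α * √β))).congr_of_eventuallyEq heq).congr_fderiv ?_
  module

theorem fderiv_Ham_vectorField (hd : d ≠ 0) (hβ : 0 < β) (hp : p ∈ OmegaB β) :
    fderiv ℝ (fun q : ℝ × ℝ ↦ Ham α d β q.1 q.2) p (vectorField α d β p) = 0 := by
  rw [(hasFDerivAt_Ham hd hβ hp).fderiv]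
  simp only [vectorField, add_apply, smul_apply, ContinuousLinearMap.coe_fst',
    ContinuousLinearMap.coe_snd', smul_eq_mul]
  ring

theorem contDiffOn_Ham (hd : d ≠ 0) (hβ : 0 < β) :
    ContDiffOn ℝ 1 (fun q : ℝ × ℝ ↦ Ham α d β q.1 q.2) (OmegaB β) := by
  have hF : ContDiffOn ℝ 0 (vectorField α d β) (OmegaB β) :=
    contDiffOn_vectorField (n := 0) hd hβ
  have hfderiv : ContDiffOn ℝ 0 (fderiv ℝ fun q : ℝ × ℝ ↦ Ham α d β q.1 q.2) (OmegaB β) :=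
    ((hF.snd.neg.smul contDiffOn_const).add (hF.fst.smul contDiffOn_const)).congr fun p hp ↦
      (hasFDerivAt_Ham hd hβ hp).fderiv
  rw [← zero_add (1 : WithTop ℕ∞), contDiffOn_succ_iff_fderiv_of_isOpen isOpen_OmegaB]
  exact ⟨fun p hp ↦ (hasFDerivAt_Ham hd hβ hp).differentiableAt.differentiableWithinAt, by simp,
    hfderiv⟩

end Hamiltonian

section RegularRegion

variable {α d β ε θ W : ℝ}

/-- The points of the closed strip `0 ≤ θ ≤ π / 2` at which none of the denominators `sin θ`,
`cos θ`, `D` of the system is smaller than `ε`. For `ε > 0` this is a closed part of `Ω_β`. -/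
def regularRegion (d β ε : ℝ) : Set (ℝ × ℝ) :=
  {p | p.1 ∈ Icc 0 (π / 2) ∧ ε ≤ sin p.1 ∧ ε ≤ cos p.1 ∧ ε ≤ Dfun d β p.1 p.2}

theorem isClosed_regularRegion : IsClosed (regularRegion d β ε) :=
  (isClosed_Icc.preimage continuous_fst).inter <|
    (isClosed_le continuous_const (continuous_sin.comp continuous_fst)).inter <|
      (isClosed_le continuous_const (continuous_cos.comp continuous_fst)).inter <|
        isClosed_le continuous_const (contDiff_Dfun (n := 0)).continuous

theorem regularRegion_subset_OmegaB (hd : d ≠ 0) (hβ : 0 < β) (hε : 0 < ε) :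
    regularRegion d β ε ⊆ OmegaB β := by
  rintro p ⟨⟨hθ₀, hθ₁⟩, hsin, hcos, hD⟩
  refine (mem_OmegaB_iff hd hβ).2 ⟨⟨hθ₀.lt_of_ne' ?_, hθ₁.lt_of_ne ?_⟩, hε.trans_le hD⟩
  · intro h
    exact (hε.trans_le hsin).ne' (by rw [h, sin_zero])
  · intro h
    exact (hε.trans_le hcos).ne' (by rw [h, cos_pi_div_two])

theorem abs_F1_le (hβ : 0 ≤ β) (hε : 0 < ε) (hD : ε ≤ Dfun d β θ W) :
    |F1 α d β θ W| ≤ |α| * √β / ε := by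
  have hDpos : 0 < Dfun d β θ W := hε.trans_le hD
  have hW : |W| ≤ √(Dfun d β θ W) := abs_le_sqrt <| le_add_of_nonneg_left (by positivity)
  have hpow : Dfun d β θ W ^ (3 / 2 : ℝ) = Dfun d β θ W * √(Dfun d β θ W) := by
    rw [sqrt_eq_rpow, ← rpow_one_add' hDpos.le (by norm_num)]
    norm_num
  rw [F1, hpow, abs_div, abs_mul, abs_mul, abs_of_nonneg (sqrt_nonneg β),
    abs_of_nonneg (mul_nonneg hDpos.le (sqrt_nonneg _))]
  calc |α| * √β * |W| / (Dfun d β θ W * √(Dfun d β θ W))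
      ≤ |α| * √β * √(Dfun d β θ W) / (Dfun d β θ W * √(Dfun d β θ W)) := by gcongr
    _ = |α| * √β / Dfun d β θ W := mul_div_mul_right _ _ (sqrt_pos.2 hDpos).ne'
    _ ≤ |α| * √β / ε := by gcongr

theorem abs_mul_sin_add_mul_cos_le (a b θ : ℝ) : |a * sin θ + b * cos θ| ≤ |a| + |b| := by
  calc |a * sin θ + b * cos θ| ≤ |a| * |sin θ| + |b| * |cos θ| := by
        simpa only [abs_mul] using abs_add_le (a * sin θ) (b * cos θ)
    _ ≤ |a| * 1 + |b| * 1 := by gcongr <;> [exact abs_sin_le_one θ; exact abs_cos_le_one θ]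
    _ = |a| + |b| := by rw [mul_one, mul_one]

theorem abs_F2_le (hd : 0 < d) (hβ : 0 < β) (hε : 0 < ε) (hsin : ε ≤ sin θ) (hcos : ε ≤ cos θ)
    (hD : ε ≤ Dfun d β θ W) :
    |F2 α d β θ W| ≤ (β ^ (3 / 2 : ℝ) + 1) / (d * ε * ε) +
      |α| * d ^ 2 * (1 + √β) * (√β + 1) / (√β * ε ^ (3 / 2 : ℝ)) := by
  have hsqrt : 0 < √β := sqrt_pos.2 hβ
  have hsin₀ := hε.trans_le hsin
  have hcos₀ := hε.trans_le hcos
  have hD₀ := hε.trans_le hD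
  have hβpow : |β ^ (3 / 2 : ℝ) * sin θ - cos θ| ≤ β ^ (3 / 2 : ℝ) + 1 := by
    simpa [abs_of_pos (rpow_pos_of_pos hβ _), sub_eq_add_neg] using
      abs_mul_sin_add_mul_cos_le (β ^ (3 / 2 : ℝ)) (-1) θ
  have hplus : |sin θ + √β * cos θ| ≤ 1 + √β := by
    simpa [abs_of_pos hsqrt] using abs_mul_sin_add_mul_cos_le 1 (√β) θ
  have hminus : |√β * sin θ - cos θ| ≤ √β + 1 := by
    simpa [abs_of_pos hsqrt, sub_eq_add_neg] using abs_mul_sin_add_mul_cos_le (√β) (-1) θ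
  rw [F2]
  refine (abs_sub _ _).trans (add_le_add ?_ ?_)
  · rw [abs_div, abs_of_pos (by positivity : 0 < d * sin θ * cos θ)]
    gcongr
  · rw [abs_div, abs_mul, abs_mul, abs_mul, abs_of_pos (by positivity : 0 < d ^ 2),
      abs_of_pos (by positivity : 0 < √β * Dfun d β θ W ^ (3 / 2 : ℝ))]
    gcongr

theorem exists_norm_vectorField_le_of_mem_regularRegion (hd : 0 < d) (hβ : 0 < β) (hε : 0 < ε) :
    ∃ M, ∀ p ∈ regularRegion d β ε, ‖vectorField α d β p‖ ≤ M :=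
  ⟨_, fun _ ⟨_, hsin, hcos, hD⟩ ↦
    max_le_max (abs_F1_le hβ.le hε hD) (abs_F2_le hd hβ hε hsin hcos hD)⟩

theorem exists_superlevel_Ham_subset_regularRegion (hα : 0 < α) (hd : 0 < d) (hβ : 0 < β) (c : ℝ) :
    ∃ ε > 0, ∀ p ∈ OmegaB β, c ≤ Ham α d β p.1 p.2 → p ∈ regularRegion d β ε := by
  have hb : 0 < β ^ (3 / 2 : ℝ) := rpow_pos_of_pos hβ _
  set C : ℝ := |c| + 1
  have hC : 0 < C := by positivity
  refine ⟨min (1 / cosh (d * C)) (min (1 / cosh (d * C / β ^ (3 / 2 : ℝ))) ((α * √β / C) ^ 2)),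
    by positivity, fun p hp hcp ↦ ?_⟩
  have hsin := sin_pos_of_mem_OmegaB hp
  have hcos := cos_pos_of_mem_OmegaB hp
  have hD : 0 < Dfun d β p.1 p.2 := ((mem_OmegaB_iff hd.ne' hβ).1 hp).2
  have hsin_nonneg : 0 ≤ β ^ (3 / 2 : ℝ) * artanh (sin p.1) / d := by
    have := artanh_nonneg hsin.le
    positivity
  have hcos_nonneg : 0 ≤ artanh (cos p.1) / d := div_nonneg (artanh_nonneg hcos.le) hd.le
  have hcoul_nonneg : 0 ≤ α * √β / √(Dfun d β p.1 p.2) := by positivity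
  have hsum : β ^ (3 / 2 : ℝ) * artanh (sin p.1) / d + artanh (cos p.1) / d +
      α * √β / √(Dfun d β p.1 p.2) ≤ C := by
    rw [Ham_eq_of_mem_OmegaB hp, ← sqrt_eq_rpow, neg_div, add_div] at hcp
    linarith [neg_abs_le c]
  refine ⟨⟨hp.1.le, hp.2.1.le⟩, (min_le_left _ _).trans ?_,
    (min_le_right _ _).trans ((min_le_left _ _).trans ?_),
    (min_le_right _ _).trans ((min_le_right _ _).trans ?_)⟩
  · refine inv_cosh_le_sin hsin hcos.le ?_
    rw [← div_le_iff₀' hd]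
    linarith
  · refine inv_cosh_le_cos hsin.le hcos ?_
    rw [le_div_iff₀' hb, ← div_le_iff₀' hd]
    linarith
  · rw [← le_sqrt (by positivity) hD.le, div_le_iff₀' hC, ← div_le_iff₀ (sqrt_pos.2 hD)]
    linarith

end RegularRegion

theorem exists_isIntegralCurve_vectorField {α d β : ℝ} (hα : 0 < α) (hd : 0 < d) (hβ : 0 < β)
    {p₀ : ℝ × ℝ} (hp₀ : p₀ ∈ OmegaB β) :
    ∃ f : ℝ → ℝ × ℝ, f 0 = p₀ ∧ (∀ t, f t ∈ OmegaB β) ∧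
      IsIntegralCurve f fun _ ↦ vectorField α d β := by
  obtain ⟨ε, hε, hsub⟩ :=
    exists_superlevel_Ham_subset_regularRegion hα hd hβ (Ham α d β p₀.1 p₀.2 - 1)
  obtain ⟨M, hM⟩ := exists_norm_vectorField_le_of_mem_regularRegion (α := α) hd hβ hε
  exact exists_isIntegralCurve_of_conserved isOpen_OmegaB
    (contDiffOn_vectorField (n := 1) hd.ne' hβ) (contDiffOn_Ham hd.ne' hβ)
    (fun p hp ↦ fderiv_Ham_vectorField hd.ne' hβ hp) hp₀ (sub_one_lt _)
    isClosed_regularRegion (regularRegion_subset_OmegaB hd.ne' hβ hε) hsub hM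

theorem isIntegralCurve_vectorField_iff {α d β : ℝ} {f : ℝ → ℝ × ℝ} :
    IsIntegralCurve f (fun _ ↦ vectorField α d β) ↔
      (∀ t, HasDerivAt (fun s ↦ (f s).1) (F1 α d β (f t).1 (f t).2) t) ∧
        ∀ t, HasDerivAt (fun s ↦ (f s).2) (F2 α d β (f t).1 (f t).2) t :=
  ⟨fun hf ↦ ⟨fun t ↦ (hasFDerivAt_fst (p := f t)).comp_hasDerivAt t (hf t),
    fun t ↦ (hasFDerivAt_snd (p := f t)).comp_hasDerivAt t (hf t)⟩,
    fun hf t ↦ (hf.1 t).prodMk (hf.2 t)⟩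

theorem global_existence_uniqueness_same_sign_general
    (α d β : ℝ) (hα : 0 < α) (hd : 0 < d) (hβ : 0 < β)
    (θ₀ W₀ : ℝ) (h₀ : (θ₀, W₀) ∈ OmegaB β) :
    ∃! p : (ℝ → ℝ) × (ℝ → ℝ),
      ContDiff ℝ 1 p.1 ∧ ContDiff ℝ 1 p.2 ∧
      p.1 0 = θ₀ ∧ p.2 0 = W₀ ∧
      (∀ t : ℝ, (p.1 t, p.2 t) ∈ OmegaB β) ∧
      (∀ t : ℝ, HasDerivAt p.1 (F1 α d β (p.1 t) (p.2 t)) t) ∧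
      (∀ t : ℝ, HasDerivAt p.2 (F2 α d β (p.1 t) (p.2 t)) t) := by
  have hv (p) (hp : p ∈ OmegaB β) : ContDiffAt ℝ 1 (vectorField α d β) p :=
    (contDiffOn_vectorField (n := 1) hd.ne' hβ).contDiffAt (isOpen_OmegaB.mem_nhds hp)
  obtain ⟨f, hf₀, hfΩ, hf⟩ := exists_isIntegralCurve_vectorField hα hd hβ h₀
  have hfC : ContDiff ℝ 1 f :=
    contDiff_one_of_isIntegralCurve hf fun t ↦ (hv _ (hfΩ t)).continuousAt
  obtain ⟨hθ, hW⟩ := isIntegralCurve_vectorField_iff.1 hf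
  refine ⟨(fun t ↦ (f t).1, fun t ↦ (f t).2), ⟨hfC.fst, hfC.snd, congrArg Prod.fst hf₀,
    congrArg Prod.snd hf₀, hfΩ, hθ, hW⟩, ?_⟩
  rintro ⟨θ, W⟩ ⟨-, -, hθ₀, hW₀, -, hθ', hW'⟩
  have hg : IsIntegralCurve (fun t ↦ (θ t, W t)) fun _ ↦ vectorField α d β :=
    isIntegralCurve_vectorField_iff.2 ⟨hθ', hW'⟩
  have hg₀ : f 0 = (θ 0, W 0) := hf₀.trans (Prod.ext hθ₀.symm hW₀.symm)
  rw [eq_of_isIntegralCurve hf hg (fun t ↦ hv _ (hfΩ t)) hg₀]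

/-- Theorem 3.1: for any α, d > 0, β ≥ 1 and (θ₀, W₀) ∈ Ω_β there is a unique
time-global C¹ solution of θ' = F₁(θ,W), W' = F₂(θ,W) staying in Ω_β. -/
theorem global_existence_uniqueness_same_sign
    (α d β : ℝ) (hα : 0 < α) (hd : 0 < d) (hβ : 1 ≤ β)
    (θ₀ W₀ : ℝ) (h₀ : (θ₀, W₀) ∈ OmegaB β) :
    ∃! p : (ℝ → ℝ) × (ℝ → ℝ),
      ContDiff ℝ 1 p.1 ∧ ContDiff ℝ 1 p.2 ∧
      p.1 0 = θ₀ ∧ p.2 0 = W₀ ∧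
      (∀ t : ℝ, (p.1 t, p.2 t) ∈ OmegaB β) ∧
      (∀ t : ℝ, HasDerivAt p.1 (F1 α d β (p.1 t) (p.2 t)) t) ∧
      (∀ t : ℝ, HasDerivAt p.2 (F2 α d β (p.1 t) (p.2 t)) t) :=
  global_existence_uniqueness_same_sign_general α d β hα hd (zero_lt_one.trans_le hβ) θ₀ W₀ h₀
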